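/- Let a > 0 and define H(t, x, y, x', y') = (e^{−(x−x')²/(4t)}/(√(4πt)·a)) Σ_{n∈ℤ} e^{2πi n(y−y')/a − 4π²n²t/a²} for t > 0. Let f : ℝ² → ℂ be continuous, a-periodic in the second variable, and such that f(x', y') = 0 whenever |x'| is sufficiently large. Then for every (x, y) ∈ ℝ², lim_{t → 0+} ∫_ℝ ∫_0^a H(t, x, y, x', y') f(x', y') dy' dx' = f(x, y). -/

import Mathlib

open Real MeasureTheory

/-- The heat kernel of the infinite flat cylinder of circumference `a`:
`H(t,x,y,x',y') = (e^{−(x−x')²/(4t)}/(√(4πt)·a)) Σ_{n∈ℤ} e^{2πi n(y−y')/a − 4π²n²t/a²}`. -/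
noncomputable def cylHeat (a t x y x' y' : ℝ) : ℂ :=
  ((Real.exp (-(x - x') ^ 2 / (4 * t)) / (Real.sqrt (4 * π * t) * a) : ℝ) : ℂ) *
    ∑' n : ℤ, Complex.exp (2 * (π:ℂ) * Complex.I * (n:ℂ) * ((y:ℂ) - (y':ℂ)) / (a:ℂ)
      - 4 * (π:ℂ) ^ 2 * (n:ℂ) ^ 2 * (t:ℂ) / (a:ℂ) ^ 2)

lemma chk_unfold_one (g : ℝ → ℂ) (hg : Integrable g) :
    ∫ s in (0:ℝ)..1, ∑' n : ℤ, g (s + n) = ∫ s, g s := by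
  have h1 := hg.hasSum_intervalIntegral_comp_add_int
  have h2 := hg.norm.hasSum_intervalIntegral_comp_add_int
  rw [← h1.tsum_eq]
  simp only [intervalIntegral.integral_of_le (zero_le_one : (0:ℝ) ≤ 1)] at *
  symm
  have h3 : ∀ n : ℤ, Integrable (fun s : ℝ => g (s + n)) (volume.restrict (Set.Ioc 0 1)) :=
    fun n => (hg.comp_add_right (n:ℝ)).integrableOn
  exact (hasSum_integral_of_summable_integral_norm h3 h2.summable).tsum_eq

lemma chk_unfold (a : ℝ) (ha : 0 < a) (g : ℝ → ℂ) (hg : Integrable g) :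
    ∫ s in (0:ℝ)..a, ∑' n : ℤ, g (s + n * a) = ∫ s, g s := by
  have h := chk_unfold_one (fun s => g (a * s)) (hg.comp_mul_left' ha.ne')
  rw [Measure.integral_comp_mul_left] at h
  have h2 := intervalIntegral.integral_comp_mul_left
    (a := 0) (b := 1) (fun s => ∑' n : ℤ, g (s + n * a)) ha.ne'
  have h3 : ∀ (s : ℝ) (n : ℤ), g (a * s + n * a) = g (a * (s + n)) := fun s n => by ring_nf
  simp only [h3, mul_zero, mul_one] at h2
  rw [h2, abs_of_pos (inv_pos.2 ha)] at h
  exact smul_right_injective ℂ (inv_pos.2 ha).ne' h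

/-- One-dimensional heat kernel. -/
noncomputable def chkK (t u : ℝ) : ℝ := Real.exp (-u ^ 2 / (4 * t)) / Real.sqrt (4 * π * t)

lemma chkK_cont (t : ℝ) : Continuous (chkK t) := by
  unfold chkK; fun_prop

lemma chkK_nonneg (t u : ℝ) : 0 ≤ chkK t u := by
  unfold chkK; positivity

lemma chkK_eq (t u : ℝ) :
    chkK t u = Real.exp (-(1 / (4 * t)) * u ^ 2) * (Real.sqrt (4 * π * t))⁻¹ := by
  unfold chkK
  rw [div_eq_mul_inv]; congr 2; ring

lemma chkK_int (t : ℝ) (ht : 0 < t) : Integrable (chkK t) := by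
  rw [show chkK t = _ from funext (chkK_eq t)]
  exact (integrable_exp_neg_mul_sq (by positivity)).mul_const _

lemma chkK_integral (t : ℝ) (ht : 0 < t) : ∫ u, chkK t u = 1 := by
  rw [show chkK t = _ from funext (chkK_eq t), integral_mul_const, integral_gaussian]
  rw [show π / (1 / (4 * t)) = 4 * π * t by field_simp]
  exact mul_inv_cancel₀ (by positivity)

lemma chkK_scale (t : ℝ) (ht : 0 < t) (c : ℝ) (F : ℝ → ℂ) :
    ∫ u, (chkK t (u - c) : ℂ) * F u = ∫ v, (chkK 1 v : ℂ) * F (c + √t * v) := by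
  have hs : 0 < √t := Real.sqrt_pos.2 ht
  rw [← integral_add_left_eq_self (fun u => (chkK t (u - c) : ℂ) * F u) c]
  have h := Measure.integral_comp_mul_left
    (fun u => (chkK t (c + u - c) : ℂ) * F (c + u)) (√t)
  rw [abs_of_pos (inv_pos.2 hs)] at h
  have h2 : ∀ v : ℝ, ((chkK t (c + √t * v - c) : ℝ) : ℂ) * F (c + √t * v)
      = (√t)⁻¹ • ((chkK 1 v : ℂ) * F (c + √t * v)) := by
    intro v
    have : chkK t (c + √t * v - c) = (√t)⁻¹ * chkK 1 v := by
      unfold chkK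
      rw [add_sub_cancel_left, mul_pow, Real.sq_sqrt ht.le, Real.sqrt_mul (by positivity), mul_one,
        mul_one, show -(t * v ^ 2) / (4 * t) = -v ^ 2 / 4 by field_simp]
      field_simp
    rw [this, Complex.real_smul]; push_cast; ring
  simp only [h2] at h
  rw [integral_smul] at h
  exact (smul_right_injective ℂ (inv_pos.2 hs).ne' h).symm

lemma chk_poisson (a t : ℝ) (ha : 0 < a) (ht : 0 < t) (x y x' y' : ℝ) :
    cylHeat a t x y x' y' =
      (chkK t (x' - x) : ℂ) * ∑' n : ℤ, (chkK t (y' + n * a - y) : ℂ) := by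
  have ha' : (a:ℂ) ≠ 0 := by exact_mod_cast ha.ne'
  have ht' : (t:ℂ) ≠ 0 := by exact_mod_cast ht.ne'
  have hp : (π:ℂ) ≠ 0 := by exact_mod_cast Real.pi_ne_zero
  have h0 : 0 < 4 * π * t / a ^ 2 := by positivity
  have h := Complex.tsum_exp_neg_quadratic (a := ((4 * π * t / a ^ 2 : ℝ) : ℂ))
    (by rw [Complex.ofReal_re]; exact h0) (Complex.I * (y - y') / a)
  have e1 : ∀ n : ℤ, 2 * (π:ℂ) * Complex.I * (n:ℂ) * ((y:ℂ) - (y':ℂ)) / (a:ℂ)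
      - 4 * (π:ℂ) ^ 2 * (n:ℂ) ^ 2 * (t:ℂ) / (a:ℂ) ^ 2
      = -π * ((4 * π * t / a ^ 2 : ℝ) : ℂ) * n ^ 2 + 2 * π * (Complex.I * (y - y') / a) * n := by
    intro n; push_cast; ring
  have e2 : ∀ n : ℤ, -(π:ℂ) / ((4 * π * t / a ^ 2 : ℝ) : ℂ)
      * (n + Complex.I * (Complex.I * (y - y') / a)) ^ 2
      = ((-(y' + n * a - y) ^ 2 / (4 * t) : ℝ) : ℂ) := by
    intro n
    have : Complex.I * (Complex.I * ((y:ℂ) - y') / a) = (y' - y) / a := by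
      rw [mul_div_assoc, ← mul_assoc, Complex.I_mul_I]; ring
    rw [this]; push_cast; field_simp; ring
  have e3 : (((4 * π * t / a ^ 2 : ℝ) : ℂ) ^ (1 / 2 : ℂ)) = ((√(4 * π * t) / a : ℝ) : ℂ) := by
    rw [show (1 / 2 : ℂ) = ((1 / 2 : ℝ) : ℂ) by norm_num, ← Complex.ofReal_cpow h0.le,
      ← Real.sqrt_eq_rpow, Real.sqrt_div' _ (by positivity), Real.sqrt_sq ha.le]
  unfold cylHeat chkK
  simp only [e1]
  rw [h, e3]
  simp only [e2]
  have hs : ((√(4 * π * t) : ℝ) : ℂ) ≠ 0 := by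
    have : 0 < √(4 * π * t) := by positivity
    exact_mod_cast this.ne'
  push_cast
  rw [tsum_div_const, show ((x:ℂ) - x') ^ 2 = (x' - x) ^ 2 by ring]
  field_simp

lemma chk_bdd (a : ℝ) (ha : 0 < a)
    (f : ℝ → ℝ → ℂ) (hf : Continuous (fun p : ℝ × ℝ => f p.1 p.2))
    (hper : ∀ x y : ℝ, f x (y + a) = f x y)
    (hsupp : ∃ K : ℝ, ∀ x y : ℝ, K ≤ |x| → f x y = 0) : ∃ M, ∀ x y, ‖f x y‖ ≤ M := by
  obtain ⟨K, hK⟩ := hsupp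
  obtain ⟨M, hM⟩ := ((isCompact_Icc (a := -K) (b := K)).prod
    (isCompact_Icc (a := (0:ℝ)) (b := a))).exists_bound_of_continuousOn hf.continuousOn
  refine ⟨max M 0, fun x y => ?_⟩
  by_cases h : K ≤ |x|
  · rw [hK x y h]; simp
  · have hp : Function.Periodic (f x) a := hper x
    obtain ⟨z, hz, hzy⟩ := hp.exists_mem_Ico₀ ha y
    rw [hzy]
    have hx := abs_le.1 (not_le.1 h).le
    exact (hM (x, z) ⟨⟨hx.1, hx.2⟩, ⟨hz.1, hz.2.le⟩⟩).trans (le_max_left _ _)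

lemma chk_rewrite (a t : ℝ) (ha : 0 < a) (ht : 0 < t)
    (f : ℝ → ℝ → ℂ) (hf : Continuous (fun p : ℝ × ℝ => f p.1 p.2))
    (hper : ∀ x y : ℝ, f x (y + a) = f x y) (M : ℝ) (hM : ∀ x y, ‖f x y‖ ≤ M) (x y : ℝ) :
    ∫ x' : ℝ, ∫ y' in (0:ℝ)..a, cylHeat a t x y x' y' * f x' y' =
      ∫ u, (chkK 1 u : ℂ) * ∫ v, (chkK 1 v : ℂ) * f (x + √t * u) (y + √t * v) := by
  rw [← chkK_scale t ht x (fun x' => ∫ v, (chkK 1 v : ℂ) * f x' (y + √t * v))]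
  congr 1; ext x'
  rw [← chkK_scale t ht y (fun y' => f x' y')]
  have hfx : Continuous (f x') := hf.comp (by fun_prop : Continuous fun z : ℝ => (x', z))
  have hint : Integrable (fun y' => (chkK t (y' - y) : ℂ) * f x' y') := by
    refine Integrable.mul_bdd (c := M) ((chkK_int t ht).comp_sub_right y).ofReal
      hfx.aestronglyMeasurable (Filter.Eventually.of_forall fun z => hM x' z)
  rw [← chk_unfold a ha _ hint, ← intervalIntegral.integral_const_mul]
  congr 1; ext y'
  rw [chk_poisson a t ha ht, mul_assoc, ← tsum_mul_right]
  have hp : Function.Periodic (f x') a := hper x'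
  congr 2; ext n
  rw [hp.int_mul n y']

lemma chk_dct {ι : Type*} {l : Filter ι} [l.IsCountablyGenerated] (G : ι → ℝ → ℂ) (c : ℂ) (M : ℝ)
    (hG : ∀ i, Continuous (G i)) (hM : ∀ i v, ‖G i v‖ ≤ M)
    (hlim : ∀ v, Filter.Tendsto (fun i => G i v) l (nhds c)) :
    Filter.Tendsto (fun i => ∫ v, (chkK 1 v : ℂ) * G i v) l (nhds c) := by
  have hc : ∫ v, (chkK 1 v : ℂ) * c = c := by
    rw [integral_mul_const, integral_complex_ofReal, chkK_integral 1 one_pos]; simp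
  rw [show nhds c = nhds (∫ v, (chkK 1 v : ℂ) * c) by rw [hc]]
  refine tendsto_integral_filter_of_dominated_convergence (fun v => chkK 1 v * M) ?_ ?_
    ((chkK_int 1 one_pos).mul_const _) ?_
  · refine Filter.Eventually.of_forall fun i => Continuous.aestronglyMeasurable ?_
    exact (Complex.continuous_ofReal.comp (chkK_cont 1)).mul (hG i)
  · refine Filter.Eventually.of_forall fun i => Filter.Eventually.of_forall fun v => ?_
    rw [norm_mul, Complex.norm_real, Real.norm_of_nonneg (chkK_nonneg _ _)]
    exact mul_le_mul_of_nonneg_left (hM i v) (chkK_nonneg _ _)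
  · exact Filter.Eventually.of_forall fun v => (hlim v).const_mul _

lemma chk_norm_le (G : ℝ → ℂ) (M : ℝ) (hM : ∀ v, ‖G v‖ ≤ M) :
    ‖∫ v, (chkK 1 v : ℂ) * G v‖ ≤ M := by
  have h : ‖∫ v, (chkK 1 v : ℂ) * G v‖ ≤ ∫ v, chkK 1 v * M := by
    refine norm_integral_le_of_norm_le ((chkK_int 1 one_pos).mul_const _)
      (Filter.Eventually.of_forall fun v => ?_)
    rw [norm_mul, Complex.norm_real, Real.norm_of_nonneg (chkK_nonneg _ _)]
    exact mul_le_mul_of_nonneg_left (hM v) (chkK_nonneg _ _)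
  rwa [integral_mul_const, chkK_integral 1 one_pos, one_mul] at h

lemma chk_cont (f : ℝ → ℝ → ℂ) (hf : Continuous (fun p : ℝ × ℝ => f p.1 p.2))
    (M : ℝ) (hM : ∀ x y, ‖f x y‖ ≤ M) :
    Continuous fun u => ∫ v, (chkK 1 v : ℂ) * f u v := by
  refine continuous_of_dominated (bound := fun v => chkK 1 v * M) ?_ ?_
    ((chkK_int 1 one_pos).mul_const _) ?_
  · intro u
    refine Continuous.aestronglyMeasurable ?_
    exact (Complex.continuous_ofReal.comp (chkK_cont 1)).mul
      (hf.comp (by fun_prop : Continuous fun z : ℝ => (u, z)))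
  · refine fun u => Filter.Eventually.of_forall fun v => ?_
    rw [norm_mul, Complex.norm_real, Real.norm_of_nonneg (chkK_nonneg _ _)]
    exact mul_le_mul_of_nonneg_left (hM u v) (chkK_nonneg _ _)
  · exact Filter.Eventually.of_forall fun v => continuous_const.mul
      (hf.comp (by fun_prop : Continuous fun z : ℝ => (z, v)))

/-- Approximate identity property of the cylinder heat kernel: for continuous `f`
`a`-periodic in the second variable and vanishing for large `|x'|`,
`∫_ℝ ∫_0^a H(t,x,y,x',y') f(x',y') dy' dx' → f(x,y)` as `t → 0+`. -/
theorem cylinder_heat_kernel_initial_condition (a : ℝ) (ha : 0 < a)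
    (f : ℝ → ℝ → ℂ) (hf : Continuous (fun p : ℝ × ℝ => f p.1 p.2))
    (hper : ∀ x y : ℝ, f x (y + a) = f x y)
    (hsupp : ∃ K : ℝ, ∀ x y : ℝ, K ≤ |x| → f x y = 0) (x y : ℝ) :
    Filter.Tendsto
      (fun t : ℝ => ∫ x' : ℝ, ∫ y' in (0:ℝ)..a, cylHeat a t x y x' y' * f x' y')
      (nhdsWithin 0 (Set.Ioi 0)) (nhds (f x y)) := by
  obtain ⟨M, hM⟩ := chk_bdd a ha f hf hper hsupp
  have key : Filter.Tendsto (fun t : ℝ => ∫ u, (chkK 1 u : ℂ) *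
      ∫ v, (chkK 1 v : ℂ) * f (x + √t * u) (y + √t * v))
      (nhdsWithin 0 (Set.Ioi 0)) (nhds (f x y)) := by
    refine chk_dct (fun t u => ∫ v, (chkK 1 v : ℂ) * f (x + √t * u) (y + √t * v)) _ M ?_ ?_ ?_
    · intro t
      exact chk_cont (fun u v => f (x + √t * u) (y + √t * v))
        (hf.comp (by fun_prop : Continuous fun p : ℝ × ℝ => (x + √t * p.1, y + √t * p.2))) M
        (fun _ _ => hM _ _)
    · exact fun t u => chk_norm_le _ M fun v => hM _ _
    · intro u
      refine chk_dct (fun t v => f (x + √t * u) (y + √t * v)) _ M ?_ (fun _ _ => hM _ _) ?_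
      · intro t
        exact hf.comp (by fun_prop : Continuous fun v : ℝ => (x + √t * u, y + √t * v))
      · intro v
        have hc : Continuous fun t : ℝ => f (x + √t * u) (y + √t * v) :=
          hf.comp (by fun_prop : Continuous fun t : ℝ => (x + √t * u, y + √t * v))
        have := hc.tendsto 0
        simp only [Real.sqrt_zero, zero_mul, add_zero] at this
        exact this.mono_left nhdsWithin_le_nhds
  refine key.congr' ?_
  filter_upwards [self_mem_nhdsWithin] with t ht
  exact (chk_rewrite a t ha ht f hf hper M hM x y).symm
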